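/- Drift of preconditioned local directions (eq. A.57). Let A be a symmetric positive definite d×d real matrix with A ⪰ ρI_d, ρ > 0. For each m ∈ {1,…,M}, let u^m ∈ ℝ^{p×d} with Frobenius norm ‖u^m‖ ≤ C_g and v^m ∈ ℝ^p with ‖v^m‖ ≤ C_f. Set w^m = (u^m)ᵀv^m, w̄ = (1/M)∑_m w^m, d^m = A^{-1}w^m, d̄ = A^{-1}w̄, ū = (1/M)∑_m u^m, v̄ = (1/M)∑_m v^m. Then ∑_{m=1}^M ‖d^m − d̄‖² ≤ (9C_g²/ρ²) ∑_{m=1}^M ‖v^m − v̄‖² + (9C_f²/ρ²) ∑_{m=1}^M ‖u^m − ū‖². -/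

import Mathlib

open Matrix

noncomputable section

/-- Frobenius norm of a real matrix. -/
def frobNorm {p d : ℕ} (A : Matrix (Fin p) (Fin d) ℝ) : ℝ :=
  Real.sqrt (∑ i, ∑ j, A i j ^ 2)

/-- Apply a real matrix to a Euclidean vector. -/
def mApply {p d : ℕ} (A : Matrix (Fin p) (Fin d) ℝ)
    (v : EuclideanSpace ℝ (Fin d)) : EuclideanSpace ℝ (Fin p) :=
  (WithLp.equiv 2 (Fin p → ℝ)).symm (A.mulVec (WithLp.equiv 2 (Fin d → ℝ) v))

/-!
The direction `A⁻¹ uᵀ v` is bilinear in `(u, v)`, and bounded by `ρ⁻¹ ‖u‖ ‖v‖` because `A` expands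
norms by at least `ρ`. The mean minimizes the sum of squared distances, so the mean of the
directions may be replaced by the direction of the means `(ū, v̄)`. What remains is
`B(u, v) - B(ū, v̄) = B(u, v - v̄) + B(u - ū, v̄)`, whose square costs a factor `2`.
-/

section Average

variable {ι E : Type*} [Fintype ι]

lemma sum_sub_average_eq_zero [AddCommGroup E] [Module ℝ E] (f : ι → E) :
    ∑ i, (f i - (Fintype.card ι : ℝ)⁻¹ • ∑ j, f j) = 0 := by
  cases isEmpty_or_nonempty ι
  · exact Fintype.sum_empty _
  · rw [Finset.sum_sub_distrib, Finset.sum_const, Finset.card_univ, ← Nat.cast_smul_eq_nsmul ℝ,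
      smul_inv_smul₀ (Nat.cast_ne_zero.2 Fintype.card_ne_zero), sub_self]

lemma norm_average_le [SeminormedAddCommGroup E] [NormedSpace ℝ E] [Nonempty ι] {f : ι → E}
    {C : ℝ} (hf : ∀ i, ‖f i‖ ≤ C) : ‖(Fintype.card ι : ℝ)⁻¹ • ∑ i, f i‖ ≤ C := by
  rw [norm_smul, norm_inv, Real.norm_natCast,
    inv_mul_le_iff₀ (Nat.cast_pos.2 Fintype.card_pos), ← nsmul_eq_mul]
  exact norm_sum_le_of_le _ (fun i _ => hf i) |>.trans_eq (by simp)

lemma sum_norm_sub_average_sq_le [NormedAddCommGroup E] [InnerProductSpace ℝ E]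
    (f : ι → E) (c : E) :
    ∑ i, ‖f i - (Fintype.card ι : ℝ)⁻¹ • ∑ j, f j‖ ^ 2 ≤ ∑ i, ‖f i - c‖ ^ 2 := by
  set b := (Fintype.card ι : ℝ)⁻¹ • ∑ j, f j
  have expand (i : ι) :
      ‖f i - c‖ ^ 2 = ‖f i - b‖ ^ 2 + 2 * inner ℝ (f i - b) (b - c) + ‖b - c‖ ^ 2 := by
    rw [← norm_add_sq_real, sub_add_sub_cancel]
  have cross : ∑ i, inner ℝ (f i - b) (b - c) = 0 := by
    rw [← sum_inner, sum_sub_average_eq_zero, inner_zero_left]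
  calc ∑ i, ‖f i - b‖ ^ 2
    _ ≤ ∑ i, ‖f i - b‖ ^ 2 + ∑ _i : ι, ‖b - c‖ ^ 2 := le_add_of_nonneg_right (by positivity)
    _ = ∑ i, ‖f i - c‖ ^ 2 := by
      simp only [expand, Finset.sum_add_distrib, ← Finset.mul_sum, cross, mul_zero, add_zero]

end Average

section Bilinear

variable {E F G : Type*} [SeminormedAddCommGroup E] [NormedSpace ℝ E]
  [SeminormedAddCommGroup F] [NormedSpace ℝ F] {K C D : ℝ}

lemma norm_bilin_sub_bilin_sq_le [SeminormedAddCommGroup G] [NormedSpace ℝ G]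
    {B : E →ₗ[ℝ] F →ₗ[ℝ] G} (hK : 0 ≤ K) (hB : ∀ x y, ‖B x y‖ ≤ K * ‖x‖ * ‖y‖)
    {x x₀ : E} {y y₀ : F} (hx : ‖x‖ ≤ C) (hy₀ : ‖y₀‖ ≤ D) :
    ‖B x y - B x₀ y₀‖ ^ 2 ≤
      2 * K ^ 2 * (C ^ 2 * ‖y - y₀‖ ^ 2 + D ^ 2 * ‖x - x₀‖ ^ 2) := by
  have split : B x y - B x₀ y₀ = B x (y - y₀) + B (x - x₀) y₀ := by
    simp only [map_sub, LinearMap.sub_apply, sub_add_sub_cancel]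
  calc ‖B x y - B x₀ y₀‖ ^ 2
    _ ≤ (K * ‖x‖ * ‖y - y₀‖ + K * ‖x - x₀‖ * ‖y₀‖) ^ 2 := by
      rw [split]
      gcongr
      exact norm_add_le_of_le (hB _ _) (hB _ _)
    _ ≤ (K * C * ‖y - y₀‖ + K * ‖x - x₀‖ * D) ^ 2 := by gcongr
    _ ≤ 2 * ((K * C * ‖y - y₀‖) ^ 2 + (K * ‖x - x₀‖ * D) ^ 2) := add_sq_le
    _ = 2 * K ^ 2 * (C ^ 2 * ‖y - y₀‖ ^ 2 + D ^ 2 * ‖x - x₀‖ ^ 2) := by ring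

lemma sum_norm_bilin_sub_average_sq_le [NormedAddCommGroup G] [InnerProductSpace ℝ G]
    {ι : Type*} [Fintype ι] {B : E →ₗ[ℝ] F →ₗ[ℝ] G} (hK : 0 ≤ K)
    (hB : ∀ x y, ‖B x y‖ ≤ K * ‖x‖ * ‖y‖) {x : ι → E} {y : ι → F}
    (hx : ∀ i, ‖x i‖ ≤ C) (hy : ∀ i, ‖y i‖ ≤ D) :
    ∑ i, ‖B (x i) (y i) - (Fintype.card ι : ℝ)⁻¹ • ∑ j, B (x j) (y j)‖ ^ 2 ≤
      2 * K ^ 2 * (C ^ 2 * ∑ i, ‖y i - (Fintype.card ι : ℝ)⁻¹ • ∑ j, y j‖ ^ 2 +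
        D ^ 2 * ∑ i, ‖x i - (Fintype.card ι : ℝ)⁻¹ • ∑ j, x j‖ ^ 2) := by
  set x₀ := (Fintype.card ι : ℝ)⁻¹ • ∑ j, x j
  set y₀ := (Fintype.card ι : ℝ)⁻¹ • ∑ j, y j
  calc ∑ i, ‖B (x i) (y i) - (Fintype.card ι : ℝ)⁻¹ • ∑ j, B (x j) (y j)‖ ^ 2
    _ ≤ ∑ i, ‖B (x i) (y i) - B x₀ y₀‖ ^ 2 :=
      sum_norm_sub_average_sq_le (fun i => B (x i) (y i)) (B x₀ y₀)
    _ ≤ ∑ i, 2 * K ^ 2 * (C ^ 2 * ‖y i - y₀‖ ^ 2 + D ^ 2 * ‖x i - x₀‖ ^ 2) := by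
      gcongr with i
      have : Nonempty ι := ⟨i⟩
      exact norm_bilin_sub_bilin_sq_le hK hB (hx i) (norm_average_le hy)
    _ = _ := by simp only [← Finset.mul_sum, Finset.sum_add_distrib]

end Bilinear

section Matrix

variable {𝕜 m n : Type*} [RCLike 𝕜] [Fintype m] [Fintype n]

lemma mul_norm_le_norm_apply_of_orthonormalBasis {E : Type*} [NormedAddCommGroup E]
    [InnerProductSpace 𝕜 E] (b : OrthonormalBasis n 𝕜 E) {T : E →ₗ[𝕜] E} {μ : n → 𝕜} {ρ : ℝ}
    (hT : ∀ i, T (b i) = μ i • b i) (hρ : 0 ≤ ρ) (hμ : ∀ i, ρ ≤ ‖μ i‖) (x : E) :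
    ρ * ‖x‖ ≤ ‖T x‖ := by
  have inner_apply (i : n) : inner 𝕜 (b i) (T x) = μ i * inner 𝕜 (b i) x := by
    have : T x = ∑ j, (μ j * inner 𝕜 (b j) x) • b j := by
      conv_lhs => rw [← b.sum_repr' x]
      simp only [map_sum, map_smul, hT, smul_smul, mul_comm]
    rw [this, b.orthonormal.inner_right_fintype]
  refine le_of_pow_le_pow_left₀ two_ne_zero (norm_nonneg _) ?_
  rw [mul_pow, ← b.sum_sq_norm_inner_right x, ← b.sum_sq_norm_inner_right (T x), Finset.mul_sum]
  simp only [inner_apply, norm_mul, mul_pow]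
  gcongr with i
  exact hμ i

lemma mul_norm_le_norm_toEuclideanLin_of_le_eigenvalues [DecidableEq n] {A : Matrix n n 𝕜}
    (hA : A.IsHermitian) {ρ : ℝ} (hρ : 0 ≤ ρ) (h : ∀ i, ρ ≤ hA.eigenvalues i)
    (x : EuclideanSpace 𝕜 n) : ρ * ‖x‖ ≤ ‖toEuclideanLin A x‖ := by
  refine mul_norm_le_norm_apply_of_orthonormalBasis hA.eigenvectorBasis
    (μ := fun i => (hA.eigenvalues i : 𝕜)) (fun i => ?_) hρ (fun i => ?_) x
  · ext j
    simpa using congrFun (hA.mulVec_eigenvectorBasis i) j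
  · simpa using (h i).trans (le_abs_self _)

lemma norm_toEuclideanLin_inv_le [DecidableEq n] {A : Matrix n n 𝕜} {ρ : ℝ} (hρ : 0 < ρ)
    (hA : ∀ x, ρ * ‖x‖ ≤ ‖toEuclideanLin A x‖) (x : EuclideanSpace 𝕜 n) :
    ‖toEuclideanLin A⁻¹ x‖ ≤ ρ⁻¹ * ‖x‖ := by
  have mulVec_injective : Function.Injective A.mulVec :=
    (injective_iff_map_eq_zero A.mulVecLin).2 fun v hv => by
      have hv' : toEuclideanLin A (WithLp.toLp 2 v) = 0 := by simpa [toLpLin_apply] using hv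
      have := hA (WithLp.toLp 2 v)
      rw [hv', norm_zero] at this
      simpa using nonpos_of_mul_nonpos_right this hρ
  have det_isUnit := A.isUnit_iff_isUnit_det.1 (mulVec_injective_iff_isUnit.1 mulVec_injective)
  have apply_inv_apply : toEuclideanLin A (toEuclideanLin A⁻¹ x) = x := by
    simp [toLpLin_apply, mulVec_mulVec, mul_nonsing_inv A det_isUnit]
  rw [le_inv_mul_iff₀ hρ]
  exact (hA _).trans_eq (by rw [apply_inv_apply])

/-- The preconditioned local direction `A⁻¹ uᵀ v`, as a bilinear map of the Jacobian `u` and the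
value `v`. When `A` is singular, `A⁻¹`, and hence the direction, is zero. -/
def preconditionedDirection [DecidableEq m] [DecidableEq n] (A : Matrix n n ℝ) :
    Matrix m n ℝ →ₗ[ℝ] EuclideanSpace ℝ m →ₗ[ℝ] EuclideanSpace ℝ n :=
  (toEuclideanLin.toLinearMap ∘ₗ (transposeLinearEquiv m n ℝ ℝ).toLinearMap).compr₂
    (toEuclideanLin A⁻¹)

section Frobenius

attribute [local instance] Matrix.frobeniusNormedAddCommGroup Matrix.frobeniusNormedSpace

lemma norm_toEuclideanLin_le_frobenius_norm_mul [DecidableEq n] (A : Matrix m n 𝕜)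
    (x : EuclideanSpace 𝕜 n) :
    ‖toEuclideanLin A x‖ ≤ ‖A‖ * ‖x‖ := by
  simpa [← replicateCol_mulVec, frobenius_norm_replicateCol, toLpLin_apply] using
    frobenius_norm_mul A (replicateCol Unit (WithLp.ofLp x))

lemma norm_preconditionedDirection_le [DecidableEq m] [DecidableEq n] {A : Matrix n n ℝ} {ρ : ℝ}
    (hρ : 0 < ρ) (hA : ∀ x, ρ * ‖x‖ ≤ ‖toEuclideanLin A x‖)
    (u : Matrix m n ℝ) (v : EuclideanSpace ℝ m) :
    ‖preconditionedDirection A u v‖ ≤ ρ⁻¹ * ‖u‖ * ‖v‖ := by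
  calc ‖toEuclideanLin A⁻¹ (toEuclideanLin uᵀ v)‖
    _ ≤ ρ⁻¹ * ‖toEuclideanLin uᵀ v‖ := norm_toEuclideanLin_inv_le hρ hA _
    _ ≤ ρ⁻¹ * (‖uᵀ‖ * ‖v‖) := by
      gcongr
      exact norm_toEuclideanLin_le_frobenius_norm_mul _ _
    _ = ρ⁻¹ * ‖u‖ * ‖v‖ := by rw [frobenius_norm_transpose, mul_assoc]

lemma frobNorm_eq_frobenius_norm {p d : ℕ} (A : Matrix (Fin p) (Fin d) ℝ) :
    frobNorm A = ‖A‖ := by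
  simp [frobNorm, frobenius_norm_def, Real.sqrt_eq_rpow]

lemma mApply_eq_toEuclideanLin {p d : ℕ} (A : Matrix (Fin p) (Fin d) ℝ)
    (x : EuclideanSpace ℝ (Fin d)) : mApply A x = toEuclideanLin A x :=
  rfl

lemma preconditionedDirection_eq_mApply {p d : ℕ} (A : Matrix (Fin d) (Fin d) ℝ)
    (u : Matrix (Fin p) (Fin d) ℝ) (v : EuclideanSpace ℝ (Fin p)) :
    preconditionedDirection A u v = mApply A⁻¹ (mApply uᵀ v) :=
  rfl

theorem drift_preconditioned_directions_general {ι : Type*} [Fintype ι] {d p : ℕ} {ρ Cg Cf : ℝ}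
    (hρ : 0 < ρ) {A : Matrix (Fin d) (Fin d) ℝ} (hA : ∀ x, ρ * ‖x‖ ≤ ‖mApply A x‖)
    {u : ι → Matrix (Fin p) (Fin d) ℝ} {v : ι → EuclideanSpace ℝ (Fin p)}
    (hu : ∀ i, frobNorm (u i) ≤ Cg) (hv : ∀ i, ‖v i‖ ≤ Cf) :
    ∑ i, ‖mApply A⁻¹ (mApply (u i)ᵀ (v i)) -
          mApply A⁻¹ ((Fintype.card ι : ℝ)⁻¹ • ∑ j, mApply (u j)ᵀ (v j))‖ ^ 2 ≤
      (2 * Cg ^ 2 / ρ ^ 2) * ∑ i, ‖v i - (Fintype.card ι : ℝ)⁻¹ • ∑ j, v j‖ ^ 2 +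
        (2 * Cf ^ 2 / ρ ^ 2) *
          ∑ i, frobNorm (u i - (Fintype.card ι : ℝ)⁻¹ • ∑ j, u j) ^ 2 := by
  simp only [frobNorm_eq_frobenius_norm] at hu ⊢
  have average_apply :
      mApply A⁻¹ ((Fintype.card ι : ℝ)⁻¹ • ∑ j, mApply (u j)ᵀ (v j)) =
        (Fintype.card ι : ℝ)⁻¹ • ∑ j, preconditionedDirection A (u j) (v j) := by
    simp only [preconditionedDirection_eq_mApply, mApply_eq_toEuclideanLin, map_smul, map_sum]
  rw [average_apply]
  simp only [← preconditionedDirection_eq_mApply]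
  refine (sum_norm_bilin_sub_average_sq_le (inv_nonneg.2 hρ.le)
    (norm_preconditionedDirection_le hρ hA) hu hv).trans_eq ?_
  ring

end Frobenius

end Matrix

/-- **Drift of preconditioned local directions (eq. A.57).**
For a symmetric matrix `A` with all eigenvalues at least `ρ > 0`, matrices `uᵐ` with Frobenius
norm at most `Cg` and vectors `vᵐ` with `‖vᵐ‖ ≤ Cf`, setting `wᵐ = (uᵐ)ᵀvᵐ`, `dᵐ = A⁻¹wᵐ` and
`d̄ = A⁻¹w̄`, one has
`∑ₘ ‖dᵐ − d̄‖² ≤ (9Cg²/ρ²)∑ₘ ‖vᵐ − v̄‖² + (9Cf²/ρ²)∑ₘ ‖uᵐ − ū‖²`. -/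
theorem drift_preconditioned_directions
    {d p M : ℕ} (hM : 0 < M)
    (ρ Cg Cf : ℝ) (hρ : 0 < ρ)
    (A : Matrix (Fin d) (Fin d) ℝ) (hA : A.IsHermitian)
    (heig : ∀ i, ρ ≤ hA.eigenvalues i)
    (u : Fin M → Matrix (Fin p) (Fin d) ℝ)
    (v : Fin M → EuclideanSpace ℝ (Fin p))
    (hu : ∀ m, frobNorm (u m) ≤ Cg)
    (hv : ∀ m, ‖v m‖ ≤ Cf) :
    ∑ m, ‖mApply A⁻¹ (mApply (u m)ᵀ (v m)) -
          mApply A⁻¹ ((M : ℝ)⁻¹ • ∑ j, mApply (u j)ᵀ (v j))‖ ^ 2 ≤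
      (9 * Cg ^ 2 / ρ ^ 2) * ∑ m, ‖v m - (M : ℝ)⁻¹ • ∑ j, v j‖ ^ 2
        + (9 * Cf ^ 2 / ρ ^ 2) * ∑ m, frobNorm (u m - (M : ℝ)⁻¹ • ∑ j, u j) ^ 2 := by
  have h := drift_preconditioned_directions_general hρ
    (mul_norm_le_norm_toEuclideanLin_of_le_eigenvalues hA hρ.le heig) hu hv
  rw [Fintype.card_fin] at h
  exact h.trans (by gcongr <;> norm_num)
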